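/- For all integers m, n ≥ 0 and every z ∈ ℂ, ∫_{ℝ²} A(z,x)·A(conj(z),y)·ψ_m(x)·ψ_n(y) dx dy = z^m · conj(z)^n / √(m!·n!), where A is the Segal–Bargmann kernel and ψ_m, ψ_n are the normalized Hermite functions. -/

import Mathlib

open Complex ComplexConjugate MeasureTheory

/-- The Segal–Bargmann kernel
`A(z,x) = π^{−1/4} · exp(−(z² + x²)/2 + √2·z·x)` for `z ∈ ℂ`, `x ∈ ℝ`. -/
noncomputable def segalBargmannKernel (z : ℂ) (x : ℝ) : ℂ :=
  (Real.pi ^ (-(1 / 4 : ℝ)) : ℝ) *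
    Complex.exp (-(z ^ 2 + (x : ℂ) ^ 2) / 2 + (Real.sqrt 2 : ℂ) * z * x)

/-- The `n`-th physicists' Hermite polynomial
`H_n(x) = (−1)^n e^{x²} (d/dx)^n e^{−x²}`. -/
noncomputable def hermitePoly (n : ℕ) (x : ℝ) : ℝ :=
  (-1 : ℝ) ^ n * Real.exp (x ^ 2) * iteratedDeriv n (fun t => Real.exp (-t ^ 2)) x

/-- The `n`-th normalized Hermite function
`ψ_n(x) = (2^n·n!·√π)^{−1/2} · H_n(x) · exp(−x²/2)`. -/
noncomputable def hermiteFun (n : ℕ) (x : ℝ) : ℝ :=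
  (Real.sqrt (2 ^ n * n.factorial * Real.sqrt Real.pi))⁻¹ * hermitePoly n x *
    Real.exp (-x ^ 2 / 2)


lemma sb_iter (n : ℕ) : ∃ P : Polynomial ℝ,
    iteratedDeriv n (fun t : ℝ => Real.exp (-t ^ 2)) = fun x => P.eval x * Real.exp (-x ^ 2) := by
  induction n with
  | zero => exact ⟨1, by simp⟩
  | succ n ih =>
    obtain ⟨P, hP⟩ := ih
    refine ⟨P.derivative - 2 * Polynomial.X * P, ?_⟩
    rw [iteratedDeriv_succ, hP]
    funext x
    have h : HasDerivAt (fun x : ℝ => P.eval x * Real.exp (-x ^ 2)) _ x :=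
      (P.hasDerivAt x).mul (((hasDerivAt_pow 2 x).fun_neg).exp)
    rw [h.deriv]
    simp
    ring

lemma sb_hasDeriv (n : ℕ) (x : ℝ) :
    HasDerivAt (iteratedDeriv n (fun t : ℝ => Real.exp (-t ^ 2)))
      (iteratedDeriv (n + 1) (fun t : ℝ => Real.exp (-t ^ 2)) x) x := by
  rw [iteratedDeriv_succ, hasDerivAt_deriv_iff]
  obtain ⟨P, hP⟩ := sb_iter n
  rw [hP]
  fun_prop

lemma sb_int_pow (a : ℂ) (k : ℕ) :
    Integrable (fun x : ℝ => cexp (a * x) * ((x ^ k * Real.exp (-x ^ 2) : ℝ) : ℂ)) := by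
  have h := (integrable_rpow_mul_exp_neg_mul_sq (b := 1 / 2) (by norm_num)
    (s := (k : ℝ)) (by linarith [Nat.cast_nonneg (α := ℝ) k])).const_mul (Real.exp (a.re ^ 2 / 2))
  refine h.mono (by fun_prop) (Filter.Eventually.of_forall fun x => ?_)
  rw [norm_mul, Complex.norm_exp, Complex.norm_real, norm_mul, norm_mul, norm_mul,
    Real.rpow_natCast]
  simp only [Real.norm_eq_abs, Real.abs_exp]
  have : Real.exp ((a * x).re) * Real.exp (-x ^ 2) ≤
      Real.exp (a.re ^ 2 / 2) * Real.exp (-(1 / 2) * x ^ 2) := by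
    rw [← Real.exp_add, ← Real.exp_add, Real.exp_le_exp]
    simp
    nlinarith [sq_nonneg (a.re - x)]
  calc _ = |x ^ k| * (Real.exp ((a * x).re) * Real.exp (-x ^ 2)) := by ring
    _ ≤ |x ^ k| * (Real.exp (a.re ^ 2 / 2) * Real.exp (-(1 / 2) * x ^ 2)) := by gcongr
    _ = _ := by ring

lemma sb_int_poly (a : ℂ) (P : Polynomial ℝ) :
    Integrable (fun x : ℝ => cexp (a * x) * ((P.eval x * Real.exp (-x ^ 2) : ℝ) : ℂ)) := by
  induction P using Polynomial.induction_on' with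
  | add p q hp hq =>
    refine (hp.add hq).congr (Filter.Eventually.of_forall fun x => ?_)
    simp
    ring
  | monomial k c =>
    refine ((sb_int_pow a k).const_mul (c : ℂ)).congr (Filter.Eventually.of_forall fun x => ?_)
    simp
    ring

lemma sb_int (a : ℂ) (n : ℕ) :
    Integrable (fun x : ℝ => cexp (a * x) *
      ((iteratedDeriv n (fun t : ℝ => Real.exp (-t ^ 2)) x : ℝ) : ℂ)) := by
  obtain ⟨P, hP⟩ := sb_iter n
  rw [hP]
  exact sb_int_poly a P

lemma sb_base (a : ℂ) :
    ∫ x : ℝ, cexp (a * x) * ((Real.exp (-x ^ 2) : ℝ) : ℂ) = (Real.sqrt Real.pi : ℂ) * cexp (a ^ 2 / 4) := by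
  have h := integral_cexp_quadratic (b := -1) (by simp) a 0
  have e : (Real.pi / -(-1 : ℂ)) ^ (1 / 2 : ℂ) = (Real.sqrt Real.pi : ℂ) := by
    rw [Real.sqrt_eq_rpow, Complex.ofReal_cpow Real.pi_pos.le]
    simp
  rw [e] at h
  convert h using 2
  · funext x
    push_cast
    rw [← Complex.exp_add]
    congr 1
    ring
  · congr 1
    ring

lemma sb_main (a : ℂ) (n : ℕ) :
    ∫ x : ℝ, cexp (a * x) * ((iteratedDeriv n (fun t : ℝ => Real.exp (-t ^ 2)) x : ℝ) : ℂ)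
      = (-a) ^ n * ((Real.sqrt Real.pi : ℂ) * cexp (a ^ 2 / 4)) := by
  induction n with
  | zero => simpa using sb_base a
  | succ n ih =>
    have hu : ∀ x : ℝ, HasDerivAt (fun x : ℝ => cexp (a * x)) (cexp (a * x) * (a * 1)) x :=
      fun x => (((hasDerivAt_id x).ofReal_comp).const_mul a).cexp
    have key := integral_mul_deriv_eq_deriv_mul_of_integrable
      (u := fun x : ℝ => cexp (a * x)) (u' := fun x : ℝ => cexp (a * x) * (a * 1))
      (v := fun x => ((iteratedDeriv n (fun t : ℝ => Real.exp (-t ^ 2)) x : ℝ) : ℂ))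
      (v' := fun x => ((iteratedDeriv (n + 1) (fun t : ℝ => Real.exp (-t ^ 2)) x : ℝ) : ℂ))
      (fun x _ => hu x) (fun x _ => (sb_hasDeriv n x).ofReal_comp) (sb_int a (n + 1))
      (((sb_int a n).const_mul a).congr (Filter.Eventually.of_forall fun x => by
        simp only [Pi.mul_apply]; ring)) (sb_int a n)
    rw [key, pow_succ, mul_assoc, mul_left_comm, ← mul_assoc, mul_assoc, ← ih] 
    rw [← integral_neg, ← integral_const_mul]
    congr 1
    funext x
    ring

lemma sb_const (n : ℕ) : Real.pi ^ (-(1 / 4 : ℝ)) *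
    (Real.sqrt (2 ^ n * n.factorial * Real.sqrt Real.pi))⁻¹ * (Real.sqrt 2 ^ n * Real.sqrt Real.pi)
      = (Real.sqrt n.factorial)⁻¹ := by
  have hp := Real.pi_pos
  have h1 : Real.sqrt (2 ^ n) = Real.sqrt 2 ^ n := by
    rw [Real.sqrt_eq_iff_mul_self_eq (by positivity) (by positivity), ← mul_pow]
    simp
  have h2 : Real.sqrt (Real.sqrt Real.pi) = Real.pi ^ (1 / 4 : ℝ) := by
    rw [Real.sqrt_eq_rpow, Real.sqrt_eq_rpow, ← Real.rpow_mul hp.le]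
    norm_num
  have h3 : Real.sqrt Real.pi = Real.pi ^ (1 / 4 : ℝ) * Real.pi ^ (1 / 4 : ℝ) := by
    rw [Real.sqrt_eq_rpow, ← Real.rpow_add hp]
    norm_num
  rw [Real.sqrt_mul (by positivity), Real.sqrt_mul (by positivity), h1, h2, h3,
    Real.rpow_neg hp.le]
  have : 0 < Real.pi ^ (1 / 4 : ℝ) := by positivity
  have : (0 : ℝ) < Real.sqrt n.factorial := Real.sqrt_pos.2 (by positivity)
  field_simp

lemma sb_one (n : ℕ) (z : ℂ) :
    ∫ x : ℝ, segalBargmannKernel z x * (hermiteFun n x : ℂ)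
      = z ^ n * ((Real.sqrt n.factorial : ℝ) : ℂ)⁻¹ := by
  have e : ∀ x : ℝ, segalBargmannKernel z x * (hermiteFun n x : ℂ) =
      (((Real.pi ^ (-(1 / 4 : ℝ)) *
        (Real.sqrt (2 ^ n * n.factorial * Real.sqrt Real.pi))⁻¹ : ℝ) : ℂ) * (-1) ^ n *
        cexp (-z ^ 2 / 2)) * (cexp ((Real.sqrt 2 : ℂ) * z * x) *
        ((iteratedDeriv n (fun t : ℝ => Real.exp (-t ^ 2)) x : ℝ) : ℂ)) := by
    intro x
    have : cexp (-(z ^ 2 + (x : ℂ) ^ 2) / 2 + (Real.sqrt 2 : ℂ) * z * x) * cexp ((x : ℂ) ^ 2) *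
        cexp (-(x : ℂ) ^ 2 / 2) = cexp (-z ^ 2 / 2) * cexp ((Real.sqrt 2 : ℂ) * z * x) := by
      rw [← Complex.exp_add, ← Complex.exp_add, ← Complex.exp_add]
      congr 1
      ring
    unfold segalBargmannKernel hermiteFun hermitePoly
    generalize iteratedDeriv n (fun t : ℝ => Real.exp (-t ^ 2)) x = D
    generalize Real.pi ^ (-(1 / 4 : ℝ)) = c
    generalize (Real.sqrt (2 ^ n * n.factorial * Real.sqrt Real.pi))⁻¹ = d
    push_cast
    linear_combination (c * d * (-1) ^ n * D : ℂ) * this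
  simp_rw [e]
  rw [integral_const_mul, sb_main, ← Complex.ofReal_inv, ← sb_const]
  have h2 : (Real.sqrt 2 : ℂ) ^ 2 = 2 := by
    rw [← Complex.ofReal_pow, Real.sq_sqrt (by norm_num)]; simp
  have h3 : cexp (-z ^ 2 / 2) * cexp (((Real.sqrt 2 : ℂ) * z) ^ 2 / 4) = 1 := by
    rw [← Complex.exp_add, mul_pow, h2, ← Complex.exp_zero]
    congr 1
    ring
  have h4 : (-1 : ℂ) ^ n * (-((Real.sqrt 2 : ℂ) * z)) ^ n = (Real.sqrt 2 : ℂ) ^ n * z ^ n := by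
    rw [← mul_pow, ← mul_pow]; simp
  generalize Real.pi ^ (-(1 / 4 : ℝ)) = c
  generalize (Real.sqrt (2 ^ n * n.factorial * Real.sqrt Real.pi))⁻¹ = d
  push_cast
  calc _ = (c * d * Real.sqrt Real.pi : ℂ) * ((-1 : ℂ) ^ n * (-((Real.sqrt 2 : ℂ) * z)) ^ n) *
        (cexp (-z ^ 2 / 2) * cexp (((Real.sqrt 2 : ℂ) * z) ^ 2 / 4)) := by ring
    _ = _ := by rw [h3, h4]; ring

/-- For all integers `m, n ≥ 0` and `z ∈ ℂ`,
`∫_{ℝ²} A(z,x)·A(conj z,y)·ψ_m(x)·ψ_n(y) dx dy = z^m · conj z^n / √(m!·n!)`. -/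
theorem integral_segalBargmann_hermite (m n : ℕ) (z : ℂ) :
    ∫ p : ℝ × ℝ,
        segalBargmannKernel z p.1 * segalBargmannKernel (conj z) p.2 *
          (hermiteFun m p.1 : ℂ) * (hermiteFun n p.2 : ℂ)
      = z ^ m * conj z ^ n /
          (Real.sqrt ((m.factorial : ℝ) * (n.factorial : ℝ)) : ℂ) := by
  have h := integral_prod_mul (μ := volume) (ν := volume)
    (fun x : ℝ => segalBargmannKernel z x * (hermiteFun m x : ℂ))
    (fun x : ℝ => segalBargmannKernel (conj z) x * (hermiteFun n x : ℂ))
  rw [sb_one, sb_one] at h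
  rw [Real.sqrt_mul (by positivity), Complex.ofReal_mul, div_eq_mul_inv, mul_inv]
  calc _ = _ := by
        congr 1
        funext p
        ring
    _ = _ := h
    _ = _ := by ring
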